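/- Let i_1, i_2, i_3 ∈ {1, …, n} be pairwise distinct indices and τ_1, τ_2, τ_3 ∈ {0,1}. Let f be the cubic tropical polynomial in n variables given as the tropical product f = (0·x_{i_1} ⊕ τ_1) ⊙ (0·x_{i_2} ⊕ τ_2) ⊙ (0·x_{i_3} ⊕ τ_3). Then T(f) = {x ∈ ℝ^n : x_{i_1} = τ_1 or x_{i_2} = τ_2 or x_{i_3} = τ_3}. -/

import Mathlib

/-!
At a point `x`, the terms of `f ⊙ g` attaining the minimum are exactly the sums of a minimal term
of `f` and a minimal term of `g`. In a cancellative monoid a sum of two nonempty sets has at least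
two elements if and only if one of the summands does, so `T(f ⊙ g) = T(f) ∪ T(g)`, whatever the
coefficients and the (nonempty) supports. It remains to observe that the two
terms of `0·x_i ⊕ τ` agree exactly where `x_i = τ`.
-/

open Finset Pointwise

/-- The affine-linear function given by a tropical term with coefficient `c`
and exponent vector `α`. -/
def tropTerm {n : ℕ} (c : ℝ) (α : Fin n → ℕ) (x : Fin n → ℝ) : ℝ :=
  c + ∑ j, (α j : ℝ) * x j

/-- The tropical hypersurface of the tropical polynomial with support `A`
and coefficients `c`: the set of points where the minimum of the terms is
attained at least twice. -/
def tropHyp {n : ℕ} (A : Finset (Fin n → ℕ)) (c : (Fin n → ℕ) → ℝ) :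
    Set (Fin n → ℝ) :=
  {x | ∃ α ∈ A, ∃ β ∈ A, α ≠ β ∧
    tropTerm (c α) α x = tropTerm (c β) β x ∧
    ∀ γ ∈ A, tropTerm (c α) α x ≤ tropTerm (c γ) γ x}

/-- A tropical polynomial: a (finite) support of exponent vectors, and coefficients. -/
structure TropPoly (n : ℕ) where
  supp : Finset (Fin n → ℕ)
  coeff : (Fin n → ℕ) → ℝ

def TropPoly.hyp {n : ℕ} (f : TropPoly n) : Set (Fin n → ℝ) :=
  tropHyp f.supp f.coeff

/-- Tropical product of two tropical polynomials. -/
noncomputable def TropPoly.mul {n : ℕ} (f g : TropPoly n) : TropPoly n where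
  supp := f.supp + g.supp
  coeff := fun γ =>
    sInf {r | ∃ α ∈ f.supp, ∃ β ∈ g.supp, α + β = γ ∧ r = f.coeff α + g.coeff β}

/-- The tropical multiplicative unit (the constant polynomial `0`). -/
def TropPoly.one (n : ℕ) : TropPoly n := ⟨{0}, fun _ => 0⟩

/-- Tropical product of a list of tropical polynomials. -/
noncomputable def TropPoly.listProd {n : ℕ} (l : List (TropPoly n)) : TropPoly n :=
  l.foldr TropPoly.mul (TropPoly.one n)

/-- The exponent vector `k · e_i`. -/
def single {n : ℕ} (i : Fin n) (k : ℕ) : Fin n → ℕ :=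
  fun j => if j = i then k else 0

theorem nontrivial_add_iff {M : Type*} [Add M] [IsCancelAdd M] {s t : Set M}
    (hs : s.Nonempty) (ht : t.Nonempty) :
    (s + t).Nontrivial ↔ s.Nontrivial ∨ t.Nontrivial := by
  refine ⟨fun h => ?_, fun h => h.elim (·.add_right ht) (·.add_left hs)⟩
  contrapose! h
  exact h.1.image2 h.2 (· + ·)

theorem tropTerm_add {n : ℕ} (c d : ℝ) (α β : Fin n → ℕ) (x : Fin n → ℝ) :
    tropTerm (c + d) (α + β) x = tropTerm c α x + tropTerm d β x := by
  simp only [tropTerm, Pi.add_apply, Nat.cast_add, add_mul, Finset.sum_add_distrib]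
  ring

theorem tropTerm_zero {n : ℕ} (c : ℝ) (x : Fin n → ℝ) : tropTerm c 0 x = c := by
  simp [tropTerm]

theorem tropTerm_single {n : ℕ} (c : ℝ) (i : Fin n) (k : ℕ) (x : Fin n → ℝ) :
    tropTerm c (single i k) x = c + k * x i := by
  simp [tropTerm, single]

theorem tropTerm_le_tropTerm {n : ℕ} {c d : ℝ} (h : c ≤ d) (α : Fin n → ℕ) (x : Fin n → ℝ) :
    tropTerm c α x ≤ tropTerm d α x :=
  add_le_add_left h _

theorem single_ne_zero {n : ℕ} (i : Fin n) {k : ℕ} (hk : k ≠ 0) : single i k ≠ 0 :=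
  fun h => hk (by simpa [single] using congrFun h i)

namespace TropPoly

variable {n : ℕ}

/-- The value at `x` of the term of `f` with exponent `α`; it is meaningful for `α ∈ f.supp`. -/
def term (f : TropPoly n) (x : Fin n → ℝ) (α : Fin n → ℕ) : ℝ :=
  tropTerm (f.coeff α) α x

/-- The exponents of `f` whose terms attain the minimum at `x`, that is, the support of the initial
form of `f` at `x`. -/
def initialSupp (f : TropPoly n) (x : Fin n → ℝ) : Set (Fin n → ℕ) :=
  {α | α ∈ f.supp ∧ ∀ β ∈ f.supp, f.term x α ≤ f.term x β}

/-- The tropical linear polynomial `0·x_i ⊕ τ`. -/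
def clause (i : Fin n) (τ : ℝ) : TropPoly n :=
  ⟨{single i 1, 0}, fun α => if α = 0 then τ else 0⟩

theorem mem_hyp_iff {f : TropPoly n} {x : Fin n → ℝ} :
    x ∈ f.hyp ↔ (f.initialSupp x).Nontrivial := by
  constructor
  · rintro ⟨α, hα, β, hβ, hne, heq, hmin⟩
    exact ⟨α, ⟨hα, hmin⟩, β, ⟨hβ, fun γ hγ => heq.ge.trans (hmin γ hγ)⟩, hne⟩
  · rintro ⟨α, ⟨hα, hαmin⟩, β, ⟨hβ, hβmin⟩, hne⟩
    exact ⟨α, hα, β, hβ, hne, (hαmin β hβ).antisymm (hβmin α hα), hαmin⟩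

theorem initialSupp_nonempty {f : TropPoly n} (hf : f.supp.Nonempty) (x : Fin n → ℝ) :
    (f.initialSupp x).Nonempty :=
  f.supp.exists_min_image (f.term x) hf

theorem isLeast_coeff_mul {f g : TropPoly n} {γ : Fin n → ℕ} (hγ : γ ∈ (f.mul g).supp) :
    IsLeast {r | ∃ α ∈ f.supp, ∃ β ∈ g.supp, α + β = γ ∧ r = f.coeff α + g.coeff β}
      ((f.mul g).coeff γ) := by
  set S := {r | ∃ α ∈ f.supp, ∃ β ∈ g.supp, α + β = γ ∧ r = f.coeff α + g.coeff β}
  have hfin : S.Finite := by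
    refine (f.supp.finite_toSet.image2 (fun α β => f.coeff α + g.coeff β)
      g.supp.finite_toSet).subset ?_
    rintro _ ⟨α, hα, β, hβ, -, rfl⟩
    exact Set.mem_image2_of_mem hα hβ
  have hne : S.Nonempty := by
    obtain ⟨α, hα, β, hβ, hαβ⟩ := Finset.mem_add.1 hγ
    exact ⟨_, α, hα, β, hβ, hαβ, rfl⟩
  exact ⟨hne.csInf_mem hfin, fun _ hr => csInf_le hfin.bddBelow hr⟩

theorem term_mul_add_le {f g : TropPoly n} {α β : Fin n → ℕ} (hα : α ∈ f.supp) (hβ : β ∈ g.supp)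
    (x : Fin n → ℝ) : (f.mul g).term x (α + β) ≤ f.term x α + g.term x β := by
  rw [term, term, term, ← tropTerm_add]
  exact tropTerm_le_tropTerm
    ((isLeast_coeff_mul (Finset.add_mem_add hα hβ)).2 ⟨α, hα, β, hβ, rfl, rfl⟩) _ x

theorem exists_term_mul_eq_add {f g : TropPoly n} {γ : Fin n → ℕ} (hγ : γ ∈ (f.mul g).supp)
    (x : Fin n → ℝ) :
    ∃ α ∈ f.supp, ∃ β ∈ g.supp, α + β = γ ∧ (f.mul g).term x γ = f.term x α + g.term x β := by
  obtain ⟨α, hα, β, hβ, rfl, hcoeff⟩ := (isLeast_coeff_mul hγ).1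
  exact ⟨α, hα, β, hβ, rfl, by rw [term, hcoeff, tropTerm_add, term, term]⟩

theorem initialSupp_mul (f g : TropPoly n) (x : Fin n → ℝ) :
    (f.mul g).initialSupp x = f.initialSupp x + g.initialSupp x := by
  apply Set.Subset.antisymm
  · rintro γ ⟨hγ, hmin⟩
    obtain ⟨α, hα, β, hβ, rfl, heq⟩ := exists_term_mul_eq_add hγ x
    have hle : ∀ α' ∈ f.supp, ∀ β' ∈ g.supp,
        f.term x α + g.term x β ≤ f.term x α' + g.term x β' := fun α' hα' β' hβ' =>
      heq.ge.trans ((hmin _ (Finset.add_mem_add hα' hβ')).trans (term_mul_add_le hα' hβ' x))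
    exact Set.add_mem_add ⟨hα, fun α' hα' => le_of_add_le_add_right (hle α' hα' β hβ)⟩
      ⟨hβ, fun β' hβ' => le_of_add_le_add_left (hle α hα β' hβ')⟩
  · rintro _ ⟨α, ⟨hα, hαmin⟩, β, ⟨hβ, hβmin⟩, rfl⟩
    refine ⟨Finset.add_mem_add hα hβ, fun γ hγ => ?_⟩
    obtain ⟨α', hα', β', hβ', rfl, heq⟩ := exists_term_mul_eq_add hγ x
    calc (f.mul g).term x (α + β) ≤ f.term x α + g.term x β := term_mul_add_le hα hβ x
      _ ≤ f.term x α' + g.term x β' := add_le_add (hαmin α' hα') (hβmin β' hβ')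
      _ = (f.mul g).term x (α' + β') := heq.symm

theorem hyp_mul {f g : TropPoly n} (hf : f.supp.Nonempty) (hg : g.supp.Nonempty) :
    (f.mul g).hyp = f.hyp ∪ g.hyp := by
  ext x
  rw [Set.mem_union, mem_hyp_iff, mem_hyp_iff, mem_hyp_iff, initialSupp_mul,
    nontrivial_add_iff (initialSupp_nonempty hf x) (initialSupp_nonempty hg x)]

theorem hyp_one : (one n).hyp = ∅ := by
  refine Set.eq_empty_of_forall_notMem ?_
  rintro x ⟨α, hα, β, hβ, hne, -⟩
  exact hne ((Finset.mem_singleton.1 hα).trans (Finset.mem_singleton.1 hβ).symm)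

theorem supp_listProd_nonempty {l : List (TropPoly n)} (hl : ∀ f ∈ l, f.supp.Nonempty) :
    (listProd l).supp.Nonempty := by
  induction l with
  | nil => exact Finset.singleton_nonempty 0
  | cons f l ih =>
    rw [List.forall_mem_cons] at hl
    exact hl.1.add (ih hl.2)

theorem mem_hyp_listProd {l : List (TropPoly n)} (hl : ∀ f ∈ l, f.supp.Nonempty)
    {x : Fin n → ℝ} : x ∈ (listProd l).hyp ↔ ∃ f ∈ l, x ∈ f.hyp := by
  induction l with
  | nil => simp [listProd, hyp_one]
  | cons f l ih =>
    rw [List.forall_mem_cons] at hl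
    have hcons : (listProd (f :: l)).hyp = f.hyp ∪ (listProd l).hyp :=
      hyp_mul hl.1 (supp_listProd_nonempty hl.2)
    rw [hcons, Set.mem_union, ih hl.2, List.exists_mem_cons_iff]

theorem hyp_of_supp_eq_pair {f : TropPoly n} {α β : Fin n → ℕ} (hsupp : f.supp = {α, β})
    (hne : α ≠ β) : f.hyp = {x | f.term x α = f.term x β} := by
  ext x
  constructor
  · rintro ⟨α', hα', β', hβ', hne', heq, -⟩
    rw [hsupp, Finset.mem_insert, Finset.mem_singleton] at hα' hβ'
    rcases hα' with rfl | rfl <;> rcases hβ' with rfl | rfl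
    · exact absurd rfl hne'
    · exact heq
    · exact heq.symm
    · exact absurd rfl hne'
  · intro heq
    have hmin : ∀ γ ∈ f.supp, f.term x α ≤ f.term x γ := by
      simp [hsupp, heq.le]
    exact ⟨α, by simp [hsupp], β, by simp [hsupp], hne, heq, hmin⟩

theorem hyp_clause (i : Fin n) (τ : ℝ) : (clause i τ).hyp = {x | x i = τ} := by
  have hne := single_ne_zero i one_ne_zero
  rw [hyp_of_supp_eq_pair rfl hne]
  simp [term, clause, hne, tropTerm_single, tropTerm_zero]

end TropPoly

theorem three_clause_hypersurface_general {n : ℕ} (l : List (Fin n × ℝ)) :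
    (TropPoly.listProd (l.map fun p => TropPoly.clause p.1 p.2)).hyp
      = {x : Fin n → ℝ | ∃ p ∈ l, x p.1 = p.2} := by
  have hne : ∀ f ∈ l.map fun p => TropPoly.clause p.1 p.2, f.supp.Nonempty :=
    List.forall_mem_map.2 fun _ _ => Finset.insert_nonempty _ _
  ext x
  simp [TropPoly.mem_hyp_listProd hne, TropPoly.hyp_clause]

/-- For pairwise distinct indices `i₁, i₂, i₃` and `τ₁, τ₂, τ₃ ∈ {0,1}`, the
tropical hypersurface of the cubic tropical product
`(0·x_{i₁} ⊕ τ₁) ⊙ (0·x_{i₂} ⊕ τ₂) ⊙ (0·x_{i₃} ⊕ τ₃)` is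
`{x : x_{i₁} = τ₁ or x_{i₂} = τ₂ or x_{i₃} = τ₃}`. -/
theorem three_clause_hypersurface (n : ℕ) (i₁ i₂ i₃ : Fin n)
    (h12 : i₁ ≠ i₂) (h13 : i₁ ≠ i₃) (h23 : i₂ ≠ i₃)
    (τ₁ τ₂ τ₃ : ℝ) (hτ₁ : τ₁ = 0 ∨ τ₁ = 1) (hτ₂ : τ₂ = 0 ∨ τ₂ = 1)
    (hτ₃ : τ₃ = 0 ∨ τ₃ = 1) :
    (TropPoly.listProd
        [⟨{single i₁ 1, 0}, fun α => if α = 0 then τ₁ else 0⟩,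
         ⟨{single i₂ 1, 0}, fun α => if α = 0 then τ₂ else 0⟩,
         ⟨{single i₃ 1, 0}, fun α => if α = 0 then τ₃ else 0⟩]).hyp
      = {x : Fin n → ℝ | x i₁ = τ₁ ∨ x i₂ = τ₂ ∨ x i₃ = τ₃} :=
  (three_clause_hypersurface_general [(i₁, τ₁), (i₂, τ₂), (i₃, τ₃)]).trans (by ext; simp)
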